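/- Let c ∈ ℝ and k ∈ ℝ, and let a, b : (0,1) → ℝ be functions with a(u) < 0 for all u, a(u) → -∞ as u → 0⁺, and b(u)/a(u) → k as u → 0⁺. Set v(u) = (a(u)·(1+c²) + c·b(u))/√(1+c²) and I(u) = ∫_{-∞}^{a(u)} Φ(x)·(2π)^{-1/2}·e^{-(c·x+b(u))²/2} dx. If v(u) → -∞ as u → 0⁺, then I(u) ~ e^{-b(u)²/(2(1+c²)) - v(u)²/2} / (2π·√(1+c²)·|a(u)|·|v(u)|) as u → 0⁺, where f ~ g means f/g → 1. -/

import Mathlib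

/-!
Mills-ratio bounds are used twice. For `E x = exp (-(s x + d)² / 2)` with `s > 0` and
`v = s a + d < 0`, comparing `E` with the derivative `E' = -s (s x + d) E` gives
`∫_{-∞}^a E ≤ E a / (s |v|)`, and, on the window `[a - 1, a]`,
`∫_{a-1}^a E ≥ E a (1 - exp (v s - s²/2)) / (s (|v| + s))`.
The case `s = 1`, `d = 0` bounds `Φ x` above and below by `exp (-x²/2)` times a factor that is
asymptotic to `(√(2π) |x|)⁻¹`. Completing the square,
`x² + (c x + b)² = (s x + c b / s)² + b² / s²` with `s = √(1 + c²)`, so the integrand is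
comparable with a multiple of such an `E`, with `s a + c b / s = v`, and the same bounds apply again.
The asserted quotient is then at most `1`, and at least a product of two factors of the form
`(1 - exp (t s - s²/2)) (-t) / (r - t)`, one with `t = a → -∞` and one with `t = v → -∞`; each
tends to `1`. Since `v → -∞`, a window of fixed length `1` already carries almost all
of the mass.
-/

open Real Filter Topology MeasureTheory

/-- The standard normal cumulative distribution function. -/
noncomputable def stdNormalCDF (x : ℝ) : ℝ :=
  ∫ t in Set.Iic x, (Real.sqrt (2 * Real.pi))⁻¹ * Real.exp (-(t ^ 2) / 2)

lemma hasDerivAt_gauss (s d x : ℝ) :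
    HasDerivAt (fun x : ℝ => rexp (-(s * x + d) ^ 2 / 2))
      (-(s * (s * x + d)) * rexp (-(s * x + d) ^ 2 / 2)) x := by
  have h1 : HasDerivAt (fun x : ℝ => s * x + d) s x := by
    simpa using ((hasDerivAt_id x).const_mul s).add_const d
  have h2 := (((h1.pow 2).neg).div_const 2).exp
  refine h2.congr_deriv ?_
  simp only [Pi.pow_apply, Pi.neg_apply]
  push_cast
  ring

lemma integrable_gauss {s : ℝ} (hs : 0 < s) (d : ℝ) :
    Integrable (fun x : ℝ => rexp (-(s * x + d) ^ 2 / 2)) := by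
  have h := integrable_exp_neg_mul_sq (b := 1 / 2) (by norm_num)
  have h2 := (h.comp_add_right d).comp_mul_left' hs.ne'
  refine h2.congr (Eventually.of_forall fun x => ?_)
  simp only
  congr 1
  ring

lemma integrable_mul_gauss {s : ℝ} (hs : 0 < s) (d : ℝ) :
    Integrable (fun x : ℝ => (s * x + d) * rexp (-(s * x + d) ^ 2 / 2)) := by
  have h := integrable_mul_exp_neg_mul_sq (b := 1 / 2) (by norm_num)
  have h2 := (h.comp_add_right d).comp_mul_left' hs.ne'
  refine h2.congr (Eventually.of_forall fun x => ?_)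
  simp only
  congr 2
  ring

lemma tendsto_gauss_atBot {s : ℝ} (hs : 0 < s) (d : ℝ) :
    Tendsto (fun x : ℝ => rexp (-(s * x + d) ^ 2 / 2)) atBot (𝓝 0) := by
  have h1 : Tendsto (fun x : ℝ => s * x + d) atBot atBot :=
    tendsto_atBot_add_const_right _ _ (tendsto_id.const_mul_atBot hs)
  have h2 : Tendsto (fun x : ℝ => (s * x + d) ^ 2) atBot atTop := by
    simpa [sq] using h1.atBot_mul_atBot₀ h1
  have h3 : Tendsto (fun x : ℝ => -(s * x + d) ^ 2 / 2) atBot atBot :=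
    (tendsto_neg_atTop_atBot.comp h2).atBot_div_const (by norm_num)
  exact Real.tendsto_exp_atBot.comp h3

/-- Upper Mills bound: on `x ≤ a` the weight `(s x + d) / (s a + d)` is at least `1`. -/
lemma gauss_upper {s : ℝ} (hs : 0 < s) (d a : ℝ) (hv : s * a + d < 0) :
    ∫ x in Set.Iic a, rexp (-(s * x + d) ^ 2 / 2) ≤
      rexp (-(s * a + d) ^ 2 / 2) / (s * -(s * a + d)) := by
  set v := s * a + d with hvdef
  have hint := (integrable_mul_gauss hs d).const_mul (-s)
  have hftc := integral_Iic_of_hasDerivAt_of_tendsto' (a := a)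
    (fun x _ => hasDerivAt_gauss s d x)
    (hint.congr (Eventually.of_forall fun x => by simp only; ring)).integrableOn
    (tendsto_gauss_atBot hs d)
  rw [sub_zero] at hftc
  rw [le_div_iff₀ (mul_pos hs (neg_pos.2 hv)), hvdef, ← hftc, ← integral_mul_const]
  refine setIntegral_mono_on ((integrable_gauss hs d).mul_const _).integrableOn
    (hint.congr (Eventually.of_forall fun x => by simp only; ring)).integrableOn
    measurableSet_Iic fun x hx => ?_
  have hx' : x ≤ a := hx
  rw [mul_comm]
  refine mul_le_mul_of_nonneg_right ?_ (exp_pos _).le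
  nlinarith [mul_le_mul_of_nonneg_left hx' (mul_pos hs hs).le]

/-- Lower Mills bound from a window of length `1`, where `|s x + d| ≤ |s a + d| + s`. -/
lemma gauss_lower {s : ℝ} (hs : 0 < s) (d a : ℝ) (hv : s * a + d < 0) :
    rexp (-(s * a + d) ^ 2 / 2) * (1 - rexp ((s * a + d) * s - s ^ 2 / 2)) /
        (s * (s - (s * a + d))) ≤
      ∫ x in Set.Ioc (a - 1) a, rexp (-(s * x + d) ^ 2 / 2) := by
  have hint := (integrable_mul_gauss hs d).const_mul (-s)
  have hint' : Integrable (fun x => -(s * (s * x + d)) * rexp (-(s * x + d) ^ 2 / 2)) :=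
    hint.congr (Eventually.of_forall fun x => by simp only; ring)
  have hftc := intervalIntegral.integral_eq_sub_of_hasDerivAt (a := a - 1) (b := a)
    (fun x _ => hasDerivAt_gauss s d x) hint'.intervalIntegrable
  rw [intervalIntegral.integral_of_le (by linarith)] at hftc
  have hE : rexp (-(s * (a - 1) + d) ^ 2 / 2) =
      rexp (-(s * a + d) ^ 2 / 2) * rexp ((s * a + d) * s - s ^ 2 / 2) := by
    rw [← exp_add]; congr 1; ring
  rw [div_le_iff₀ (mul_pos hs (by linarith)), mul_sub, mul_one, ← hE, ← hftc,
    ← integral_mul_const]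
  refine setIntegral_mono_on hint'.integrableOn
    ((integrable_gauss hs d).mul_const _).integrableOn measurableSet_Ioc fun x hx => ?_
  rw [mul_comm (rexp _)]
  refine mul_le_mul_of_nonneg_right ?_ (exp_pos _).le
  nlinarith [mul_le_mul_of_nonneg_left hx.1.le (mul_pos hs hs).le]

lemma integrable_stdNormal :
    Integrable (fun t : ℝ => (√(2 * π))⁻¹ * rexp (-(t ^ 2) / 2)) := by
  have h := (integrable_gauss one_pos 0).const_mul (√(2 * π))⁻¹
  simpa using h

lemma stdNormalCDF_mono : Monotone stdNormalCDF := fun _ _ h =>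
  setIntegral_mono_set integrable_stdNormal.integrableOn
    (Eventually.of_forall fun _ => by positivity)
    (Eventually.of_forall (Set.Iic_subset_Iic.2 h))

lemma stdNormalCDF_nonneg (x : ℝ) : 0 ≤ stdNormalCDF x :=
  integral_nonneg fun _ => by positivity

lemma stdNormalCDF_upper {x : ℝ} (hx : x < 0) :
    stdNormalCDF x ≤ (√(2 * π))⁻¹ * (rexp (-x ^ 2 / 2) / -x) := by
  have h := gauss_upper one_pos 0 x (by simpa using hx)
  simp only [one_mul, add_zero] at h
  rw [stdNormalCDF, integral_const_mul]
  exact mul_le_mul_of_nonneg_left h (by positivity)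

lemma stdNormalCDF_lower {x : ℝ} (hx : x < 0) :
    (√(2 * π))⁻¹ * (rexp (-x ^ 2 / 2) * (1 - rexp (x - 1 / 2)) / (1 - x)) ≤
      stdNormalCDF x := by
  have h := gauss_lower one_pos 0 x (by simpa using hx)
  simp only [one_mul, add_zero, mul_one, one_pow] at h
  rw [stdNormalCDF, integral_const_mul]
  refine mul_le_mul_of_nonneg_left (h.trans ?_) (by positivity)
  have hi := integrable_gauss one_pos 0
  simp only [one_mul, add_zero] at hi
  exact setIntegral_mono_set hi.integrableOn (Eventually.of_forall fun _ => (exp_pos _).le)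
    (Eventually.of_forall Set.Ioc_subset_Iic_self)

/-- The lower bounds lose factors of this form: the exponential accounts for cutting the
integral to a window, the ratio for bounding the weight by its largest value there. -/
lemma tendsto_factor {s : ℝ} (hs : 0 < s) (q r : ℝ) :
    Tendsto (fun t : ℝ => (1 - rexp (t * s - q)) * (-t / (r - t))) atBot (𝓝 1) := by
  have h1 : Tendsto (fun t : ℝ => t * s - q) atBot atBot :=
    tendsto_atBot_add_const_right _ (-q) (tendsto_id.atBot_mul_const hs)
  have h2 : Tendsto (fun t : ℝ => 1 - rexp (t * s - q)) atBot (𝓝 1) := by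
    simpa using (Real.tendsto_exp_atBot.comp h1).const_sub 1
  have h3 : Tendsto (fun t : ℝ => r - t) atBot atTop := by
    simpa [sub_eq_add_neg] using
      tendsto_atTop_add_const_left atBot r tendsto_neg_atBot_atTop
  have h4 : Tendsto (fun t : ℝ => -t / (r - t)) atBot (𝓝 1) := by
    have h5 : Tendsto (fun t : ℝ => 1 - r / (r - t)) atBot (𝓝 1) := by
      simpa using (h3.const_div_atTop r).const_sub 1
    refine h5.congr' ?_
    filter_upwards [h3.eventually_gt_atTop 0] with t ht
    field_simp
    ring
  simpa using h2.mul h4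

/-- Non-asymptotic two-sided bound behind the theorem, for fixed `a < 0` and `b`; the square has
been completed with `s = √(1 + c²)` and `v = s a + c b / s`. -/
lemma integral_bounds {c s a b v D : ℝ} (hs : 0 < s) (hs2 : s ^ 2 = 1 + c ^ 2)
    (ha : a < 0) (hv : v < 0) (hva : v = s * a + c * b / s)
    (hD : D = rexp (-b ^ 2 / (2 * (1 + c ^ 2)) - v ^ 2 / 2) / (2 * π * s * |a| * |v|)) :
    D * (((1 - rexp (a * 1 - 1 / 2)) * (-a / (2 - a))) *
        ((1 - rexp (v * s - s ^ 2 / 2)) * (-v / (s - v)))) ≤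
      ∫ x in Set.Iic a, stdNormalCDF x * ((√(2 * π))⁻¹ * rexp (-(c * x + b) ^ 2 / 2)) ∧
    ∫ x in Set.Iic a, stdNormalCDF x * ((√(2 * π))⁻¹ * rexp (-(c * x + b) ^ 2 / 2)) ≤ D := by
  set d := c * b / s with hd
  set K := (√(2 * π))⁻¹ with hK
  have hKpos : 0 < K := by positivity
  have hK2 : K * K = (2 * π)⁻¹ := by
    rw [hK, ← mul_inv, Real.mul_self_sqrt (by positivity)]
  set C := (2 * π)⁻¹ * rexp (-b ^ 2 / (2 * (1 + c ^ 2))) with hC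
  have hCpos : 0 < C := by positivity
  -- completing the square in the exponents
  have hprod : ∀ x, K * rexp (-x ^ 2 / 2) * (K * rexp (-(c * x + b) ^ 2 / 2)) =
      C * rexp (-(s * x + d) ^ 2 / 2) := by
    intro x
    have : rexp (-x ^ 2 / 2) * rexp (-(c * x + b) ^ 2 / 2) =
        rexp (-b ^ 2 / (2 * (1 + c ^ 2))) * rexp (-(s * x + d) ^ 2 / 2) := by
      rw [← exp_add, ← exp_add, ← hs2, hd]
      congr 1
      field_simp
      linear_combination (x ^ 2 * s ^ 2 - b ^ 2) * hs2
    calc _ = (K * K) * (rexp (-x ^ 2 / 2) * rexp (-(c * x + b) ^ 2 / 2)) := by ring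
      _ = _ := by rw [this, hK2, hC]; ring
  set E : ℝ → ℝ := fun x => rexp (-(s * x + d) ^ 2 / 2) with hE
  set g : ℝ → ℝ := fun x => stdNormalCDF x * (K * rexp (-(c * x + b) ^ 2 / 2)) with hg
  have hEint : Integrable E := integrable_gauss hs d
  have hg0 : ∀ x, 0 ≤ g x := fun x => mul_nonneg (stdNormalCDF_nonneg x) (by positivity)
  have hgu : ∀ x ≤ a, g x ≤ C / -a * E x := by
    intro x hx
    have hx0 : x < 0 := hx.trans_lt ha
    have h1 : stdNormalCDF x ≤ K * (rexp (-x ^ 2 / 2) / -a) := by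
      refine (stdNormalCDF_upper hx0).trans (mul_le_mul_of_nonneg_left ?_ hKpos.le)
      exact div_le_div_of_nonneg_left (exp_pos _).le (by linarith) (by linarith)
    calc g x ≤ K * (rexp (-x ^ 2 / 2) / -a) * (K * rexp (-(c * x + b) ^ 2 / 2)) :=
          mul_le_mul_of_nonneg_right h1 (by positivity)
      _ = (K * rexp (-x ^ 2 / 2) * (K * rexp (-(c * x + b) ^ 2 / 2))) / -a := by ring
      _ = _ := by rw [hprod, hE]; ring
  have hA : 0 ≤ 1 - rexp (a - 1 / 2) :=
    sub_nonneg.2 (Real.exp_le_one_iff.2 (by linarith))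
  have hgl : ∀ x ∈ Set.Ioc (a - 1) a, C * (1 - rexp (a - 1 / 2)) / (2 - a) * E x ≤ g x := by
    intro x hx
    have hx0 : x < 0 := hx.2.trans_lt ha
    have h1 : K * (rexp (-x ^ 2 / 2) * (1 - rexp (a - 1 / 2)) / (2 - a)) ≤
        stdNormalCDF x := by
      refine le_trans (mul_le_mul_of_nonneg_left ?_ hKpos.le) (stdNormalCDF_lower hx0)
      have h2 : rexp (x - 1 / 2) ≤ rexp (a - 1 / 2) := exp_le_exp.2 (by linarith [hx.2])
      have h3 : 1 - x ≤ 2 - a := by linarith [hx.1]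
      have h4 : 0 < 1 - x := by linarith
      have h5 : 0 ≤ 1 - rexp (x - 1 / 2) := by linarith
      gcongr
    calc _ = (C * rexp (-(s * x + d) ^ 2 / 2)) * ((1 - rexp (a - 1 / 2)) / (2 - a)) := by
          rw [hE]; ring
      _ = K * (rexp (-x ^ 2 / 2) * (1 - rexp (a - 1 / 2)) / (2 - a)) *
            (K * rexp (-(c * x + b) ^ 2 / 2)) := by rw [← hprod]; ring
      _ ≤ g x := mul_le_mul_of_nonneg_right h1 (by positivity)
  have hgm : AEStronglyMeasurable g (volume.restrict (Set.Iic a)) := by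
    refine Measurable.aestronglyMeasurable (stdNormalCDF_mono.measurable.mul ?_)
    fun_prop
  -- For `c = 0` the factor `exp (-(c x + b)² / 2)` is constant, so the decay must come from `Φ`.
  have hgint : IntegrableOn g (Set.Iic a) := by
    refine Integrable.mono' (hEint.const_mul (C / -a)).integrableOn hgm ?_
    refine (ae_restrict_iff' measurableSet_Iic).2 (Eventually.of_forall fun x hx => ?_)
    rw [Real.norm_of_nonneg (hg0 x)]
    exact hgu x hx
  have hD' : D = C * E a / (s * -a * -v) := by
    rw [hD, abs_of_neg ha, abs_of_neg hv, hC, hE, sub_eq_add_neg, exp_add, hva]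
    have : -(s * a + d) ^ 2 / 2 = -((s * a + d) ^ 2 / 2) := by ring
    simp only [this]
    field_simp
  constructor
  · have h1 := gauss_lower hs d a (hva ▸ hv)
    rw [← hva] at h1
    have h2 : ∫ x in Set.Ioc (a - 1) a, C * (1 - rexp (a - 1 / 2)) / (2 - a) * E x ≤
        ∫ x in Set.Iic a, g x :=
      (setIntegral_mono_on (hEint.const_mul _).integrableOn
        (hgint.mono_set Set.Ioc_subset_Iic_self) measurableSet_Ioc hgl).trans
      (setIntegral_mono_set hgint (Eventually.of_forall hg0)
        (Eventually.of_forall Set.Ioc_subset_Iic_self))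
    rw [integral_const_mul] at h2
    refine le_trans (le_of_eq ?_) ((mul_le_mul_of_nonneg_left h1
      (div_nonneg (mul_nonneg hCpos.le hA) (by linarith))).trans h2)
    have e1 : E a = rexp (-v ^ 2 / 2) := by rw [hE, hva]
    rw [hD', e1, mul_one]
    have n1 : (2 - a) ≠ 0 := by linarith
    have n2 : (s - v) ≠ 0 := by linarith
    have n3 := ha.ne
    have n4 := hv.ne
    field_simp
  · have h1 := gauss_upper hs d a (hva ▸ hv)
    rw [← hva] at h1
    have h2 : ∫ x in Set.Iic a, g x ≤ ∫ x in Set.Iic a, C / -a * E x :=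
      setIntegral_mono_on hgint (hEint.const_mul _).integrableOn measurableSet_Iic hgu
    rw [integral_const_mul] at h2
    refine (h2.trans (mul_le_mul_of_nonneg_left h1
      (div_nonneg hCpos.le (by linarith)))).trans (le_of_eq ?_)
    have e1 : E a = rexp (-v ^ 2 / 2) := by rw [hE, hva]
    rw [hD', e1]
    have n3 := ha.ne
    have n4 := hv.ne
    field_simp

/-- Theorem 1 of the paper, case `v(u) → -∞`. -/
theorem integral_asymptotics_v_atBot (c k : ℝ) (a b : ℝ → ℝ)
    (ha_neg : ∀ u ∈ Set.Ioo (0 : ℝ) 1, a u < 0)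
    (ha : Tendsto a (𝓝[>] (0 : ℝ)) atBot)
    (hb : Tendsto (fun u => b u / a u) (𝓝[>] (0 : ℝ)) (𝓝 k))
    (hv : Tendsto (fun u => (a u * (1 + c ^ 2) + c * b u) / Real.sqrt (1 + c ^ 2))
      (𝓝[>] (0 : ℝ)) atBot) :
    Tendsto (fun u =>
      (∫ x in Set.Iic (a u),
          stdNormalCDF x * ((Real.sqrt (2 * Real.pi))⁻¹ *
            Real.exp (-(c * x + b u) ^ 2 / 2))) /
      (Real.exp (-(b u) ^ 2 / (2 * (1 + c ^ 2)) -
          ((a u * (1 + c ^ 2) + c * b u) / Real.sqrt (1 + c ^ 2)) ^ 2 / 2) /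
        (2 * Real.pi * Real.sqrt (1 + c ^ 2) * |a u| *
          |(a u * (1 + c ^ 2) + c * b u) / Real.sqrt (1 + c ^ 2)|)))
      (𝓝[>] (0 : ℝ)) (𝓝 1) := by
  have hs : 0 < √(1 + c ^ 2) := Real.sqrt_pos.2 (by positivity)
  have hs2 : √(1 + c ^ 2) ^ 2 = 1 + c ^ 2 := Real.sq_sqrt (by positivity)
  set s := √(1 + c ^ 2) with hsdef
  have hlow := ((tendsto_factor one_pos (1 / 2) 2).comp ha).mul
    ((tendsto_factor hs (s ^ 2 / 2) s).comp hv)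
  rw [one_mul] at hlow
  have key : ∀ᶠ u in 𝓝[>] (0 : ℝ), a u < 0 ∧ (a u * (1 + c ^ 2) + c * b u) / s < 0 :=
    (ha.eventually_lt_atBot 0).and (hv.eventually_lt_atBot 0)
  have hva : ∀ u, (a u * (1 + c ^ 2) + c * b u) / s = s * a u + c * b u / s := by
    intro u
    rw [← hs2]
    field_simp
  have hDpos : ∀ u, a u < 0 ∧ (a u * (1 + c ^ 2) + c * b u) / s < 0 →
      0 < rexp (-(b u) ^ 2 / (2 * (1 + c ^ 2)) -
          ((a u * (1 + c ^ 2) + c * b u) / s) ^ 2 / 2) /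
        (2 * π * s * |a u| * |(a u * (1 + c ^ 2) + c * b u) / s|) := by
    intro u hu
    have h1 := abs_pos.2 hu.1.ne
    have h2 := abs_pos.2 hu.2.ne
    exact div_pos (exp_pos _) (by have := Real.pi_pos; positivity)
  refine tendsto_of_tendsto_of_tendsto_of_le_of_le' hlow tendsto_const_nhds ?_ ?_
  · filter_upwards [key] with u hu
    rw [le_div_iff₀ (hDpos u hu), mul_comm]
    exact (integral_bounds hs hs2 hu.1 hu.2 (hva u) rfl).1
  · filter_upwards [key] with u hu
    rw [div_le_one (hDpos u hu)]
    exact (integral_bounds hs hs2 hu.1 hu.2 (hva u) rfl).2
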